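/- arXiv:2104.11361 — 2 statements merged into one kernel-verified Lean document; each statement's English description precedes it below -/
import Mathlib

section
/- Let C be an Ab4 abelian category, ω, X ⊆ C with ω X-projective (Ext^i(W,X')=0 for W∈ω, X'∈X, i>0), and T ∈ C admitting an infinite exact sequence ⋯ → W_1 → W_0 → T → 0 with all W_i ∈ ω ∪ {0}. Then there exists an object S ∈ C such that T^⊥ ∩ X = S^{⊥₁} ∩ X. -/
/-!
Take `S = ∐ Z`, the coproduct of `T` and all its syzygies `Z (i + 1)`. On `𝒳` the objects `W i` are
invisible to positive `Ext`, so dimension shifting identifies the vanishing of `Ext^(n+1)(T, X)`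
with that of `Ext^1(Z n, X)`. It remains to see that `Ext^1(∐ Z, X)` vanishes as soon as all
`Ext^1(Z n, X)` do. In degree one this does not need coproducts to be exact: a class in
`Ext^1(∐ Z, X)` is the class of an extension `0 → X → E → ∐ Z → 0`, and sections of `E` over each
`Z n` assemble into a splitting.
-/

open CategoryTheory CategoryTheory.Limits

universe w v u

variable {C : Type u} [Category.{v} C] [Abelian C] [HasExt.{w} C]

/-- `Ext^i(M, N) = 0`. -/
def extZero (M N : C) (i : ℕ) : Prop := Subsingleton (Abelian.Ext M N i)

/-- `0 → A → B → D → 0` is a short exact sequence. -/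
def IsSES {A B D : C} (f : A ⟶ B) (g : B ⟶ D) : Prop :=
  ∃ w : f ≫ g = 0, (ShortComplex.mk f g w).ShortExact

/-- There exists a short exact sequence `0 → A → B → D → 0`. -/
def SES (A B D : C) : Prop := ∃ (f : A ⟶ B) (g : B ⟶ D), IsSES f g

/-- The right orthogonal class `𝒯^⊥` (vanishing of `Ext^i` for all `i > 0`). -/
def rPerp (𝒯 : Set C) : Set C := {N | ∀ M ∈ 𝒯, ∀ i, 0 < i → extZero M N i}

/-- The right `1`-st orthogonal class `𝒯^{⊥₁}`. -/
def rPerp1 (𝒯 : Set C) : Set C := {N | ∀ M ∈ 𝒯, extZero M N 1}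

/-- The left orthogonal class `⊥𝒮`. -/
def lPerp (𝒮 : Set C) : Set C := {M | ∀ N ∈ 𝒮, ∀ i, 0 < i → extZero M N i}

/-- The left `1`-st orthogonal class `⊥₁𝒮`. -/
def lPerp1 (𝒮 : Set C) : Set C := {M | ∀ N ∈ 𝒮, extZero M N 1}

/-- `α` is a relative cogenerator in `𝒳`. -/
def IsRelCogen (α 𝒳 : Set C) : Prop :=
  α ⊆ 𝒳 ∧ ∀ X ∈ 𝒳, ∃ (W X' : C), W ∈ α ∧ X' ∈ 𝒳 ∧ SES X W X'

/-- `β` is a relative generator in `𝒳`. -/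
def IsRelGen (β 𝒳 : Set C) : Prop :=
  β ⊆ 𝒳 ∧ ∀ X ∈ 𝒳, ∃ (X' W : C), W ∈ β ∧ X' ∈ 𝒳 ∧ SES X' W X

/-- `pd_𝒳(𝒯) ≤ n`. -/
def pdLE (𝒳 𝒯 : Set C) (n : ℕ) : Prop :=
  ∀ M ∈ 𝒯, ∀ X ∈ 𝒳, ∀ k, n < k → extZero M X k

/-- `𝒴` is closed by `n`-quotients in `𝒳`: for any exact sequence
`0 → K n → Y (n-1) → ⋯ → Y 0 → K 0 → 0` (encoded by its short exact pieces
`0 → K (i+1) → Y i → K i → 0`) with all `Y i ∈ 𝒴` and all kernels `K i ∈ 𝒳`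
(in particular the end terms), the end term `K 0` is in `𝒴`. -/
def ClosedByQuotients (𝒴 𝒳 : Set C) (n : ℕ) : Prop :=
  ∀ (K Y : ℕ → C),
    (∀ i < n, Y i ∈ 𝒴) →
    (∀ i ≤ n, K i ∈ 𝒳) →
    (∀ i < n, SES (K (i + 1)) (Y i) (K i)) →
    K 0 ∈ 𝒴

/-- `M` has a `𝒴_𝒳`-coresolution of length `n`, i.e. an exact sequence
`0 → M → Y 0 → ⋯ → Y (n-1) → Z n → 0` with `Z n ∈ 𝒳 ∩ 𝒴`, `Y i ∈ 𝒴`, and all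
intermediate images `Z i ∈ 𝒳`. -/
def CoresLen (𝒴 𝒳 : Set C) (M : C) (n : ℕ) : Prop :=
  ∃ (Z Y : ℕ → C), Z 0 = M ∧ Z n ∈ 𝒳 ∩ 𝒴 ∧
    (∀ i < n, Y i ∈ 𝒴) ∧ (∀ i, 0 < i → i < n → Z i ∈ 𝒳) ∧
    (∀ i < n, SES (Z i) (Y i) (Z (i + 1)))

/-- The `𝒴_𝒳`-coresolution dimension of `M`, as an extended natural number. -/
noncomputable def coresdim (𝒴 𝒳 : Set C) (M : C) : ℕ∞ :=
  sInf {e : ℕ∞ | ∃ m : ℕ, e = (m : ℕ∞) ∧ CoresLen 𝒴 𝒳 M m}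

/-- The `𝒳`-injective dimension of `M`, as an extended natural number. -/
noncomputable def relId (𝒳 : Set C) (M : C) : ℕ∞ :=
  sInf {e : ℕ∞ | ∃ m : ℕ, e = (m : ℕ∞) ∧ ∀ X ∈ 𝒳, ∀ k, m < k → extZero X M k}

/-- `𝒯` is precovering. -/
def Precovering (𝒯 : Set C) : Prop :=
  ∀ M : C, ∃ (Z : C) (f : Z ⟶ M), Z ∈ 𝒯 ∧
    ∀ (Z' : C) (h : Z' ⟶ M), Z' ∈ 𝒯 → ∃ h' : Z' ⟶ Z, h' ≫ f = h

/-- `𝒯` is preenveloping. -/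
def Preenveloping (𝒯 : Set C) : Prop :=
  ∀ M : C, ∃ (Z : C) (f : M ⟶ Z), Z ∈ 𝒯 ∧
    ∀ (Z' : C) (h : M ⟶ Z'), Z' ∈ 𝒯 → ∃ h' : Z ⟶ Z', f ≫ h' = h

/-- `𝒯 = add 𝒯`: closed under finite coproducts and under direct summands (retracts). -/
def IsAddClosed (𝒯 : Set C) : Prop :=
  (∀ A B : C, A ∈ 𝒯 → B ∈ 𝒯 → (A ⊞ B) ∈ 𝒯) ∧
  (∀ (A B : C) (i : A ⟶ B) (r : B ⟶ A), i ≫ r = 𝟙 A → B ∈ 𝒯 → A ∈ 𝒯)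

/-- Closed under direct summands (retracts). -/
def IsSmdClosed (𝒯 : Set C) : Prop :=
  ∀ (A B : C) (i : A ⟶ B) (r : B ⟶ A), i ≫ r = 𝟙 A → B ∈ 𝒯 → A ∈ 𝒯

/-- Closed under extensions. -/
def IsExtClosed (𝒯 : Set C) : Prop :=
  ∀ (A E B : C), A ∈ 𝒯 → B ∈ 𝒯 → SES A E B → E ∈ 𝒯

/-- `ℬ` is `𝒳`-coresolving: it contains an `𝒳`-injective relative cogenerator in `𝒳`,
is closed under mono-cokernels in `ℬ ∩ 𝒳`, and is closed under extensions. -/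
def IsCoresolving (ℬ 𝒳 : Set C) : Prop :=
  (∃ α : Set C, α ⊆ ℬ ∩ 𝒳 ∧ (∀ X ∈ 𝒳, ∀ A ∈ α, ∀ i, 0 < i → extZero X A i) ∧
    IsRelCogen α 𝒳) ∧
  (∀ (M M' M'' : C), M ∈ ℬ ∩ 𝒳 → M' ∈ ℬ ∩ 𝒳 → SES M M' M'' → M'' ∈ ℬ) ∧
  IsExtClosed ℬ

/-- `(𝒜, ℬ)` is a left `𝒳`-complete pair. -/
def LeftComplete (𝒜 ℬ 𝒳 : Set C) : Prop :=
  ∀ X ∈ 𝒳, ∃ B A : C, B ∈ ℬ ∩ 𝒳 ∧ A ∈ 𝒜 ∩ 𝒳 ∧ SES B A X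

/-- `(𝒜, ℬ)` is a right `𝒳`-complete pair. -/
def RightComplete (𝒜 ℬ 𝒳 : Set C) : Prop :=
  ∀ X ∈ 𝒳, ∃ B A : C, B ∈ ℬ ∩ 𝒳 ∧ A ∈ 𝒜 ∩ 𝒳 ∧ SES X B A

/-- `(𝒜, ℬ)` is an `𝒳`-hereditary pair. -/
def IsHereditary (𝒜 ℬ 𝒳 : Set C) : Prop :=
  ∀ A ∈ 𝒜 ∩ 𝒳, ∀ B ∈ ℬ ∩ 𝒳, ∀ i, 1 ≤ i → extZero A B i

/-- `M` has a (possibly infinite) `𝒴_𝒳`-coresolution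
`0 → M → Y 0 → Y 1 → ⋯` with `Y i ∈ 𝒴 ∪ {0}` and all images in `𝒳 ∪ {0}`. -/
def InfCores (𝒳 𝒴 : Set C) (M : C) : Prop :=
  ∃ (Z Y : ℕ → C), Z 0 = M ∧
    (∀ i, Y i ∈ 𝒴 ∨ IsZero (Y i)) ∧
    (∀ i, 0 < i → Z i ∈ 𝒳 ∨ IsZero (Z i)) ∧
    (∀ i, SES (Z i) (Y i) (Z (i + 1)))

/-- The class `(𝒳,𝒴)_∞^∨`. -/
def InfCoresClass (𝒳 𝒴 : Set C) : Set C := {M | M ∈ 𝒳 ∧ InfCores 𝒳 𝒴 M}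

/-- The class `(𝒳,𝒴)^∨`. -/
def FinCoresClass (𝒳 𝒴 : Set C) : Set C := {M | M ∈ 𝒳 ∧ ∃ m : ℕ, CoresLen 𝒴 𝒳 M m}

section ShortExact

open DerivedCategory Pretriangulated

variable {𝒜 : Type u} [Category.{v} 𝒜] [Abelian 𝒜] [HasDerivedCategory.{w} 𝒜]

lemma shortExact_of_distTriang_singleFunctor {S : ShortComplex 𝒜}
    {δ : (singleFunctor 𝒜 0).obj S.X₃ ⟶ ((singleFunctor 𝒜 0).obj S.X₁)⟦(1 : ℤ)⟧}
    (hT : Triangle.mk ((singleFunctor 𝒜 0).map S.f) ((singleFunctor 𝒜 0).map S.g) δ ∈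
      distTriang (DerivedCategory 𝒜)) : S.ShortExact := by
  let H₀ : singleFunctor 𝒜 0 ⋙ homologyFunctor 𝒜 0 ≅ 𝟭 𝒜 :=
    singleFunctorCompHomologyFunctorIso 𝒜 0
  let arrowIso {X Y : 𝒜} (f : X ⟶ Y) :
      Arrow.mk ((homologyFunctor 𝒜 0).map ((singleFunctor 𝒜 0).map f)) ≅ Arrow.mk f :=
    ((Functor.mapArrowFunctor 𝒜 𝒜).mapIso H₀).app (Arrow.mk f)
  have hexact : S.Exact := by
    refine ShortComplex.exact_of_iso ?_ (HomologySequence.exact₂ _ hT 0)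
    exact ShortComplex.isoMk (H₀.app _) (H₀.app _) (H₀.app _)
      (H₀.hom.naturality S.f).symm (H₀.hom.naturality S.g).symm
  have mono : Mono S.f := ((MorphismProperty.monomorphisms 𝒜).arrow_mk_iso_iff (arrowIso S.f)).1 <|
    (HomologySequence.mono_homologyMap_mor₁_iff _ hT (-1) 0).2 <|
      (isZero_of_isGE ((singleFunctor 𝒜 0).obj S.X₃) 0 (-1) (by lia)).eq_of_src _ _
  have epi : Epi S.g := ((MorphismProperty.epimorphisms 𝒜).arrow_mk_iso_iff (arrowIso S.g)).1 <|
    (HomologySequence.epi_homologyMap_mor₂_iff _ hT 0 1).2 <|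
      (isZero_of_isLE ((singleFunctor 𝒜 0).obj S.X₁) 0 1 (by lia)).eq_of_tgt _ _
  exact { exact := hexact }

lemma exists_distTriang_singleFunctor {A D : 𝒜}
    (δ : (singleFunctor 𝒜 0).obj D ⟶ ((singleFunctor 𝒜 0).obj A)⟦(1 : ℤ)⟧) :
    ∃ (E : 𝒜) (f : A ⟶ E) (g : E ⟶ D),
      Triangle.mk ((singleFunctor 𝒜 0).map f) ((singleFunctor 𝒜 0).map g) δ ∈
        distTriang (DerivedCategory 𝒜) := by
  obtain ⟨K, a, b, hK⟩ := distinguished_cocone_triangle₂ δ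
  have : K.IsLE 0 := TStructure.t.isLE₂ _ hK 0
    (inferInstanceAs (((singleFunctor 𝒜 0).obj A).IsLE 0))
    (inferInstanceAs (((singleFunctor 𝒜 0).obj D).IsLE 0))
  have : K.IsGE 0 := TStructure.t.isGE₂ _ hK 0
    (inferInstanceAs (((singleFunctor 𝒜 0).obj A).IsGE 0))
    (inferInstanceAs (((singleFunctor 𝒜 0).obj D).IsGE 0))
  obtain ⟨E, ⟨φ⟩⟩ := exists_iso_singleFunctor_obj_of_isGE_of_isLE K 0
  obtain ⟨f, hf⟩ := (singleFunctor 𝒜 0).map_surjective (a ≫ φ.hom)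
  obtain ⟨g, hg⟩ := (singleFunctor 𝒜 0).map_surjective (φ.inv ≫ b)
  have comm₁ : (singleFunctor 𝒜 0).map f ≫ φ.inv = 𝟙 _ ≫ a := by simp [hf]
  have comm₂ : (singleFunctor 𝒜 0).map g ≫ 𝟙 _ = φ.inv ≫ b := by simp [hg]
  have comm₃ : δ ≫ (𝟙 ((singleFunctor 𝒜 0).obj A))⟦(1 : ℤ)⟧' = 𝟙 _ ≫ δ := by simp
  exact ⟨E, f, g, isomorphic_distinguished _ hK _ <|
    Triangle.isoMk _ _ (Iso.refl _) φ.symm (Iso.refl _) comm₁ comm₂ comm₃⟩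

lemma singleδ_eq_of_distTriang {S : ShortComplex 𝒜} (hS : S.ShortExact)
    {δ : (singleFunctor 𝒜 0).obj S.X₃ ⟶ ((singleFunctor 𝒜 0).obj S.X₁)⟦(1 : ℤ)⟧}
    (hT : Triangle.mk ((singleFunctor 𝒜 0).map S.f) ((singleFunctor 𝒜 0).map S.g) δ ∈
      distTriang (DerivedCategory 𝒜)) : hS.singleδ = δ := by
  obtain ⟨c, hc₂, hc₃⟩ : ∃ c : (singleFunctor 𝒜 0).obj S.X₃ ⟶ (singleFunctor 𝒜 0).obj S.X₃,
      (singleFunctor 𝒜 0).map S.g ≫ c = 𝟙 _ ≫ (singleFunctor 𝒜 0).map S.g ∧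
        hS.singleδ ≫ (𝟙 ((singleFunctor 𝒜 0).obj S.X₁))⟦(1 : ℤ)⟧' = c ≫ δ :=
    complete_distinguished_triangle_morphism _ _ hS.singleTriangle_distinguished hT (𝟙 _) (𝟙 _)
      ((Category.comp_id _).trans (Category.id_comp _).symm)
  obtain ⟨c, rfl⟩ := (singleFunctor 𝒜 0).map_surjective c
  have : Epi S.g := hS.epi_g
  have hc : c = 𝟙 _ := by
    rw [← cancel_epi S.g]
    apply (singleFunctor 𝒜 0).map_injective
    simpa using hc₂
  simpa [hc] using hc₃

end ShortExact

section Ext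

open Abelian

lemma exists_shortExact_extClass_eq {A D : C} (e : Ext D A 1) :
    ∃ (E : C) (f : A ⟶ E) (g : E ⟶ D) (w : f ≫ g = 0)
      (hS : (ShortComplex.mk f g w).ShortExact), hS.extClass = e := by
  let := HasDerivedCategory.standard C
  obtain ⟨E, f, g, hT⟩ := exists_distTriang_singleFunctor e.hom
  have w : f ≫ g = 0 := (DerivedCategory.singleFunctor C 0).map_injective <| by
    rw [Functor.map_comp, Functor.map_zero]
    exact Pretriangulated.comp_distTriang_mor_zero₁₂ _ hT
  let S := ShortComplex.mk f g w
  have hS : S.ShortExact := shortExact_of_distTriang_singleFunctor (S := S) hT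
  refine ⟨E, f, g, w, hS, Ext.ext ?_⟩
  rw [hS.extClass_hom, singleδ_eq_of_distTriang hS hT]

lemma exists_lift_of_comp_extClass_eq_zero {S : ShortComplex C} (hS : S.ShortExact) {M : C}
    (a : M ⟶ S.X₃) (ha : (Ext.mk₀ a).comp hS.extClass (zero_add 1) = 0) :
    ∃ b : M ⟶ S.X₂, b ≫ S.g = a := by
  obtain ⟨x, hx⟩ := Ext.covariant_sequence_exact₃ M hS (Ext.mk₀ a) (zero_add 1) ha
  obtain ⟨b, rfl⟩ := (Ext.mk₀_bijective M S.X₂).2 x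
  rw [Ext.mk₀_comp_mk₀] at hx
  exact ⟨b, (Ext.mk₀_bijective M S.X₃).1 hx⟩

lemma ext_one_sigma_eq_zero {ι : Type*} (Z : ι → C) [HasCoproduct Z] {X : C}
    (e : Ext (∐ Z) X 1) (he : ∀ i, (Ext.mk₀ (Sigma.ι Z i)).comp e (zero_add 1) = 0) :
    e = 0 := by
  obtain ⟨E, f, g, w, hS, rfl⟩ := exists_shortExact_extClass_eq e
  choose b hb using fun i => exists_lift_of_comp_extClass_eq_zero hS (Sigma.ι Z i) (he i)
  have section_g : Sigma.desc b ≫ g = 𝟙 (∐ Z) := Sigma.hom_ext _ _ fun i => by simp [hb]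
  calc hS.extClass
      = (Ext.mk₀ (Sigma.desc b ≫ g)).comp hS.extClass (zero_add 1) := by
        rw [section_g, Ext.mk₀_id_comp]
    _ = (Ext.mk₀ (Sigma.desc b)).comp ((Ext.mk₀ g).comp hS.extClass (zero_add 1)) (zero_add 1) :=
        (Ext.mk₀_comp_mk₀_assoc _ _ _).symm
    _ = 0 := by rw [hS.comp_extClass, Ext.comp_zero]

end Ext

section extZero

open Abelian

lemma extZero_of_retract {M M' X : C} {n : ℕ} (r : Retract M M') (h : extZero M' X n) :
    extZero M X n := by
  refine subsingleton_of_forall_eq 0 fun e => ?_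
  have he : (Ext.mk₀ r.r).comp e (zero_add n) = 0 := h.elim _ _
  rw [← Ext.mk₀_id_comp e, ← r.retract, ← Ext.mk₀_comp_mk₀_assoc, he, Ext.comp_zero]

lemma extZero_one_sigma_iff {ι : Type*} (Z : ι → C) [HasCoproduct Z] (X : C) :
    extZero (∐ Z) X 1 ↔ ∀ i, extZero (Z i) X 1 := by
  refine ⟨fun h i => extZero_of_retract ⟨Sigma.ι Z i, retraction (Sigma.ι Z i), by simp⟩ h,
    fun h => ?_⟩
  exact subsingleton_of_forall_eq 0 fun e =>
    ext_one_sigma_eq_zero Z e fun i => (h i).elim _ _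

lemma mem_lPerp_of_isZero (𝒳 : Set C) {M : C} (hM : IsZero M) : M ∈ lPerp 𝒳 := fun X _ n _ => by
  refine subsingleton_of_forall_eq 0 fun e => ?_
  rw [← Ext.mk₀_id_comp e, hM.eq_of_src (𝟙 M) 0, Ext.mk₀_zero, Ext.zero_comp]

lemma SES.extZero_succ_iff {A B D X : C} {n : ℕ} (h : SES A B D)
    (hn : extZero B X n) (hn' : extZero B X (n + 1)) :
    extZero D X (n + 1) ↔ extZero A X n := by
  obtain ⟨f, g, w, hS⟩ := h
  constructor <;> intro h <;> refine subsingleton_of_forall_eq 0 fun e => ?_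
  · obtain ⟨e', rfl⟩ := Ext.contravariant_sequence_exact₁ hS X e (add_comm 1 n) (h.elim _ _)
    rw [hn.elim e' 0, Ext.comp_zero]
  · obtain ⟨e', rfl⟩ := Ext.contravariant_sequence_exact₃ hS X e (hn'.elim _ _) (add_comm 1 n)
    rw [h.elim e' 0, Ext.comp_zero]

lemma extZero_add_iff_syzygy {Z W : ℕ → C} {X : C} (hW : ∀ i k, 0 < k → extZero (W i) X k)
    (hses : ∀ i, SES (Z (i + 1)) (W i) (Z i)) {m : ℕ} (hm : 0 < m) (n : ℕ) :
    extZero (Z 0) X (m + n) ↔ extZero (Z n) X m := by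
  induction n generalizing m with
  | zero => rfl
  | succ n ih =>
    rw [← (hses n).extZero_succ_iff (hW n m hm) (hW n (m + 1) m.succ_pos), ← ih m.succ_pos,
      Nat.succ_add_eq_add_succ]

lemma mem_rPerp_singleton_iff {T X : C} : X ∈ rPerp {T} ↔ ∀ n, extZero T X (1 + n) := by
  simp only [rPerp, Set.mem_ofPred_eq, Set.mem_singleton_iff, forall_eq]
  exact ⟨fun h n => h _ (by lia), fun h i hi => Nat.add_sub_of_le hi ▸ h (i - 1)⟩

lemma mem_rPerp1_singleton_iff {S X : C} : X ∈ rPerp1 {S} ↔ extZero S X 1 := by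
  simp only [rPerp1, Set.mem_ofPred_eq, Set.mem_singleton_iff, forall_eq]

end extZero

theorem stmt_9_general (𝒳 : Set C) (Z W : ℕ → C) [HasCoproduct Z]
    (hW : ∀ i, W i ∈ lPerp 𝒳) (hses : ∀ i, SES (Z (i + 1)) (W i) (Z i)) :
    rPerp {Z 0} ∩ 𝒳 = rPerp1 {∐ Z} ∩ 𝒳 := by
  ext X
  refine and_congr_left fun hX => ?_
  calc X ∈ rPerp {Z 0}
      ↔ ∀ n, extZero (Z 0) X (1 + n) := mem_rPerp_singleton_iff
    _ ↔ ∀ n, extZero (Z n) X 1 :=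
        forall_congr' (extZero_add_iff_syzygy (fun i => hW i X hX) hses one_pos)
    _ ↔ extZero (∐ Z) X 1 := (extZero_one_sigma_iff Z X).symm
    _ ↔ X ∈ rPerp1 {∐ Z} := mem_rPerp1_singleton_iff.symm

/-- in an Ab4 abelian category, if `ω` is `𝒳`-projective and `T`
admits an infinite exact sequence `⋯ → W 1 → W 0 → T → 0` with all `W i ∈ ω ∪ {0}`,
then there exists `S` with `T^⊥ ∩ 𝒳 = S^{⊥₁} ∩ 𝒳`. -/
theorem stmt_9 [HasCoproducts.{v} C] [AB4 C] (ω 𝒳 : Set C) (T : C)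
    (hωproj : ∀ W ∈ ω, ∀ X ∈ 𝒳, ∀ i, 0 < i → extZero W X i)
    (Z W : ℕ → C) (hZ0 : Z 0 = T)
    (hW : ∀ i, W i ∈ ω ∨ IsZero (W i))
    (hses : ∀ i, SES (Z (i + 1)) (W i) (Z i)) :
    ∃ S : C, rPerp {T} ∩ 𝒳 = rPerp1 {S} ∩ 𝒳 := by
  subst hZ0
  exact ⟨∐ Z, stmt_9_general 𝒳 Z W
    (fun i => (hW i).elim (hωproj (W i)) (mem_lPerp_of_isZero 𝒳)) hses⟩
end

section
/- Let C be an abelian category, X ⊆ C, and (A,B) a right X-complete, X-hereditary pair with (A∩X)^⊥ ∩ A ∩ X ⊆ B∩X and B closed under direct summands. Then (A∩X)^⊥ ∩ X ⊆ B. -/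
open CategoryTheory CategoryTheory.Limits

universe w v u

variable {C : Type u} [Category.{v} C] [Abelian C] [HasExt.{w} C]

lemma exists_f_comp_eq_of_extClass_comp_eq_zero {S : ShortComplex C} (hS : S.ShortExact) {Y : C}
    (φ : S.X₁ ⟶ Y) (hφ : hS.extClass.comp (Abelian.Ext.mk₀ φ) (add_zero 1) = 0) :
    ∃ ψ : S.X₂ ⟶ Y, S.f ≫ ψ = φ := by
  obtain ⟨x, hx⟩ := Abelian.Ext.contravariant_sequence_exact₁ hS Y (Abelian.Ext.mk₀ φ) _ hφ
  obtain ⟨ψ, rfl⟩ := (Abelian.Ext.mk₀_bijective _ _).surjective x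
  refine ⟨ψ, (Abelian.Ext.mk₀_bijective _ _).injective ?_⟩
  rw [← Abelian.Ext.mk₀_comp_mk₀, hx]

lemma isSplitMono_f_of_extClass_eq_zero {S : ShortComplex C} (hS : S.ShortExact)
    (h : hS.extClass = 0) : IsSplitMono S.f := by
  obtain ⟨r, hr⟩ := exists_f_comp_eq_of_extClass_comp_eq_zero hS (𝟙 S.X₁)
    (by rw [h, Abelian.Ext.zero_comp])
  exact ⟨⟨⟨r, hr⟩⟩⟩

lemma IsSmdClosed.mem_of_ses {𝒯 : Set C} (h𝒯 : IsSmdClosed 𝒯) {A B D : C} (hB : B ∈ 𝒯)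
    (hses : SES A B D) (hext : extZero D A 1) : A ∈ 𝒯 := by
  obtain ⟨f, _, _, hS⟩ := hses
  have : IsSplitMono f := isSplitMono_f_of_extClass_eq_zero hS (hext.elim _ _)
  exact h𝒯 A B f (retraction f) (IsSplitMono.id f) hB

lemma rPerp_subset_rPerp1 (𝒯 : Set C) : rPerp 𝒯 ⊆ rPerp1 𝒯 :=
  fun _ hN M hM ↦ hN M hM 1 one_pos

theorem stmt_15_general (𝒳 𝒜 ℬ : Set C) (hrc : RightComplete 𝒜 ℬ 𝒳) (hsmd : IsSmdClosed ℬ) :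
    rPerp1 (𝒜 ∩ 𝒳) ∩ 𝒳 ⊆ ℬ := by
  rintro M ⟨hM, hMX⟩
  obtain ⟨B, A, hB, hA, hses⟩ := hrc M hMX
  exact hsmd.mem_of_ses hB.1 hses (hM A hA)

/-- if `(𝒜, ℬ)` is a right `𝒳`-complete, `𝒳`-hereditary pair with
`(𝒜∩𝒳)^⊥ ∩ 𝒜 ∩ 𝒳 ⊆ ℬ ∩ 𝒳` and `ℬ` closed under direct summands, then
`(𝒜∩𝒳)^⊥ ∩ 𝒳 ⊆ ℬ`. -/
theorem stmt_15 (𝒳 𝒜 ℬ : Set C) (hrc : RightComplete 𝒜 ℬ 𝒳)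
    (hher : IsHereditary 𝒜 ℬ 𝒳)
    (hsub : rPerp (𝒜 ∩ 𝒳) ∩ 𝒜 ∩ 𝒳 ⊆ ℬ ∩ 𝒳)
    (hsmd : IsSmdClosed ℬ) :
    rPerp (𝒜 ∩ 𝒳) ∩ 𝒳 ⊆ ℬ :=
  (Set.inter_subset_inter_left 𝒳 (rPerp_subset_rPerp1 _)).trans
    (stmt_15_general 𝒳 𝒜 ℬ hrc hsmd)
end
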